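/- arXiv:1902.08506 — 2 statements merged into one kernel-verified Lean document; each statement's English description precedes it below -/
import Mathlib

section
/- Let m ≥ 1 be an integer, let p_-, q_-, p_+, q_+ ∈ ℝ with -1 < p_± ≤ q_± < 1, and for 0 ≤ l̂ ≤ m let ξ_l̂^{(m)} denote the unique real solution of 2mξ + v_{p_-}(ξ) + v_{q_-}(ξ) + v_{p_+}(ξ) + v_{q_+}(ξ) = 2π(l̂+1). Set κ_± := (1/2)( ((1-|p_-|)/(1+|p_-|))^{±1} + ((1-|q_-|)/(1+|q_-|))^{±1} + ((1-|p_+|)/(1+|p_+|))^{±1} + ((1-|q_+|)/(1+|q_+|))^{±1} ). Then for every 0 ≤ l̂ ≤ m one has π(l̂+1)/(m+κ_-) ≤ ξ_l̂^{(m)} ≤ π(l̂+1)/(m+κ_+). -/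
/-!
The integrand of `v q` is the Poisson kernel, which lies between `(1 - |q|) / (1 + |q|)` and
`(1 + |q|) / (1 - |q|)` because its denominator lies between `(1 - |q|)²` and `(1 + |q|)²`.
Integrating over `[0, ξ]` bounds `v q ξ` by these constants times `ξ` for `0 ≤ ξ`. A solution of the
equation is nonnegative, since its left side is nonpositive for `ξ ≤ 0` and its right side is
positive; inserting the linear bounds on the four `v`-terms and dividing gives the claim.
-/

/-- The function `v_q(ξ) = ∫_0^ξ (1-q²)/(1-2q cos x + q²) dx`. -/
noncomputable def v (q ξ : ℝ) : ℝ :=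
  ∫ x in (0:ℝ)..ξ, (1 - q^2) / (1 - 2*q*Real.cos x + q^2)

theorem poisson_denom_bounds (q x : ℝ) :
    (1 - |q|)^2 ≤ 1 - 2*q*Real.cos x + q^2 ∧ 1 - 2*q*Real.cos x + q^2 ≤ (1 + |q|)^2 := by
  have hc : |q * Real.cos x| ≤ |q| := by
    rw [abs_mul]
    exact mul_le_of_le_one_right (abs_nonneg q) (Real.abs_cos_le_one x)
  have h := abs_le.mp hc
  have hs := sq_abs q
  constructor <;> nlinarith [h.1, h.2]

theorem poisson_denom_pos {q : ℝ} (hq : |q| < 1) (x : ℝ) :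
    0 < 1 - 2*q*Real.cos x + q^2 :=
  lt_of_lt_of_le (pow_pos (sub_pos.mpr hq) 2) (poisson_denom_bounds q x).1

theorem poisson_bounds {q : ℝ} (hq : |q| < 1) (x : ℝ) :
    (1 - |q|) / (1 + |q|) ≤ (1 - q^2) / (1 - 2*q*Real.cos x + q^2) ∧
      (1 - q^2) / (1 - 2*q*Real.cos x + q^2) ≤ (1 + |q|) / (1 - |q|) := by
  have ha := abs_nonneg q
  have hD := poisson_denom_pos hq x
  obtain ⟨hl, hu⟩ := poisson_denom_bounds q x
  have h1 : 0 < 1 - |q| := sub_pos.mpr hq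
  have h2 : 0 < 1 + |q| := by linarith
  have hf : 1 - q^2 = (1 - |q|) * (1 + |q|) := by rw [← sq_abs q]; ring
  rw [hf, div_le_div_iff₀ h2 hD, div_le_div_iff₀ hD h1]
  constructor
  · nlinarith [mul_le_mul_of_nonneg_left hu h1.le]
  · nlinarith [mul_le_mul_of_nonneg_left hl h2.le]

theorem poisson_intervalIntegrable {q : ℝ} (hq : |q| < 1) (a b : ℝ) :
    IntervalIntegrable (fun x => (1 - q^2) / (1 - 2*q*Real.cos x + q^2))
      MeasureTheory.volume a b := by
  apply Continuous.intervalIntegrable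
  exact Continuous.div (by fun_prop) (by fun_prop) fun x => (poisson_denom_pos hq x).ne'

theorem v_bounds {q ξ : ℝ} (hq : |q| < 1) (hξ : 0 ≤ ξ) :
    (1 - |q|) / (1 + |q|) * ξ ≤ v q ξ ∧ v q ξ ≤ (1 + |q|) / (1 - |q|) * ξ := by
  have hi := poisson_intervalIntegrable hq 0 ξ
  constructor
  · have h := intervalIntegral.integral_mono_on hξ
      (intervalIntegrable_const (c := (1 - |q|) / (1 + |q|))) hi
      fun x _ => (poisson_bounds hq x).1
    rw [intervalIntegral.integral_const, smul_eq_mul, sub_zero, mul_comm ξ] at h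
    exact h
  · have h := intervalIntegral.integral_mono_on hξ hi
      (intervalIntegrable_const (c := (1 + |q|) / (1 - |q|)))
      fun x _ => (poisson_bounds hq x).2
    rw [intervalIntegral.integral_const, smul_eq_mul, sub_zero, mul_comm ξ] at h
    exact h

theorem v_nonpos {q ξ : ℝ} (hq : |q| < 1) (hξ : ξ ≤ 0) : v q ξ ≤ 0 := by
  unfold v
  rw [intervalIntegral.integral_symm, neg_nonpos]
  refine intervalIntegral.integral_nonneg hξ fun x _ => le_trans ?_ (poisson_bounds hq x).1
  exact div_nonneg (sub_nonneg.mpr hq.le) (by positivity)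

theorem stmt4 (m : ℕ) (hm : 1 ≤ m) (pm qm pp qp : ℝ)
    (h1 : -1 < pm) (h2 : pm ≤ qm) (h3 : qm < 1)
    (h4 : -1 < pp) (h5 : pp ≤ qp) (h6 : qp < 1)
    (ξhat : Fin (m+1) → ℝ)
    (hξ : ∀ lh : Fin (m+1),
      2*(m:ℝ)*(ξhat lh) + v pm (ξhat lh) + v qm (ξhat lh) + v pp (ξhat lh) + v qp (ξhat lh)
        = 2*Real.pi*(((lh : ℕ) : ℝ) + 1)) :
    ∀ lh : Fin (m+1),
      Real.pi*(((lh : ℕ) : ℝ) + 1) /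
        ((m:ℝ) + (1/2)*((1+|pm|)/(1-|pm|) + (1+|qm|)/(1-|qm|)
          + (1+|pp|)/(1-|pp|) + (1+|qp|)/(1-|qp|))) ≤ ξhat lh ∧
      ξhat lh ≤ Real.pi*(((lh : ℕ) : ℝ) + 1) /
        ((m:ℝ) + (1/2)*((1-|pm|)/(1+|pm|) + (1-|qm|)/(1+|qm|)
          + (1-|pp|)/(1+|pp|) + (1-|qp|)/(1+|qp|))) := by
  intro lh
  have a1 : |pm| < 1 := abs_lt.mpr ⟨h1, by linarith⟩
  have a2 : |qm| < 1 := abs_lt.mpr ⟨by linarith, h3⟩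
  have a3 : |pp| < 1 := abs_lt.mpr ⟨h4, by linarith⟩
  have a4 : |qp| < 1 := abs_lt.mpr ⟨by linarith, h6⟩
  have e := hξ lh
  generalize ξhat lh = ξ at e ⊢
  have hm' : (1:ℝ) ≤ m := by exact_mod_cast hm
  have hR : 0 < Real.pi * (((lh : ℕ) : ℝ) + 1) := by positivity
  have hpos : 0 ≤ ξ := by
    by_contra! hneg
    have := mul_nonpos_of_nonneg_of_nonpos (by linarith : (0:ℝ) ≤ 2*m) hneg.le
    linarith [v_nonpos a1 hneg.le, v_nonpos a2 hneg.le, v_nonpos a3 hneg.le,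
      v_nonpos a4 hneg.le]
  have key : ∀ q : ℝ, |q| < 1 → 0 ≤ (1 + |q|) / (1 - |q|) ∧ 0 ≤ (1 - |q|) / (1 + |q|) := by
    intro q hq
    have : 0 < 1 - |q| := sub_pos.mpr hq
    constructor <;> positivity
  obtain ⟨k1, l1⟩ := key pm a1
  obtain ⟨k2, l2⟩ := key qm a2
  obtain ⟨k3, l3⟩ := key pp a3
  obtain ⟨k4, l4⟩ := key qp a4
  obtain ⟨b1, c1⟩ := v_bounds a1 hpos
  obtain ⟨b2, c2⟩ := v_bounds a2 hpos
  obtain ⟨b3, c3⟩ := v_bounds a3 hpos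
  obtain ⟨b4, c4⟩ := v_bounds a4 hpos
  constructor
  · rw [div_le_iff₀ (by linarith)]
    linarith
  · rw [le_div_iff₀ (by linarith)]
    linarith
end

section
/- Let m ≥ 1, let p_-, q_-, p_+, q_+ ∈ ℝ with -1 < p_± ≤ q_± < 1, set a_± = p_± q_±, b_± = p_± + q_±, let p_l(ξ) := U_l(cos ξ) - b_- U_{l-1}(cos ξ) + a_- U_{l-2}(cos ξ), let ξ_l̂^{(m)} (0 ≤ l̂ ≤ m) be the unique real solution of 2mξ + v_{p_-}(ξ) + v_{q_-}(ξ) + v_{p_+}(ξ) + v_{q_+}(ξ) = 2π(l̂+1), and define the weights Δ_l^{(m)} := (1 - a_- δ_{l,0})^{-1} (1 - a_+ δ_{l,m})^{-1}. Then for all 0 ≤ l̂ ≠ k̂ ≤ m: ∑_{l=0}^{m} p_l(ξ_l̂^{(m)}) p_l(ξ_k̂^{(m)}) Δ_l^{(m)} = 0. -/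
/-- The Bernstein–Szegő polynomial `p_l(ξ) = U_l(cos ξ) - b₋ U_{l-1}(cos ξ) + a₋ U_{l-2}(cos ξ)`,
with the Chebyshev polynomials of the second kind indexed by `ℤ`. -/
noncomputable def bs (am bm : ℝ) (l : ℤ) (ξ : ℝ) : ℝ :=
  (Polynomial.Chebyshev.U ℝ l).eval (Real.cos ξ)
    - bm * (Polynomial.Chebyshev.U ℝ (l - 1)).eval (Real.cos ξ)
    + am * (Polynomial.Chebyshev.U ℝ (l - 2)).eval (Real.cos ξ)

open Real

lemma one_sub_mul_cos_pos {q : ℝ} (hq : -1 < q) (hq' : q < 1) (x : ℝ) : 0 < 1 - q * cos x := by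
  have h : |q * cos x| ≤ |q| := by
    rw [abs_mul]
    exact mul_le_of_le_one_right (abs_nonneg _) (abs_cos_le_one x)
  linarith [le_abs_self (q * cos x), abs_lt.mpr ⟨hq, hq'⟩]

lemma kernel_denom_pos {q : ℝ} (hq : -1 < q) (hq' : q < 1) (x : ℝ) :
    0 < 1 - 2 * q * cos x + q ^ 2 := by
  have h := one_sub_mul_cos_pos hq hq' x
  nlinarith [pow_pos h 2, sq_nonneg (q * sin x), sin_sq_add_cos_sq x]

/-- The argument of `1 - q e^{-ix}`, for `-1 < q < 1`. -/
noncomputable def phase (q x : ℝ) : ℝ := arctan (q * sin x / (1 - q * cos x))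

lemma continuous_kernel {q : ℝ} (hq : -1 < q) (hq' : q < 1) :
    Continuous fun x : ℝ => (1 - q ^ 2) / (1 - 2 * q * cos x + q ^ 2) :=
  Continuous.div (by fun_prop) (by fun_prop) fun x => (kernel_denom_pos hq hq' x).ne'

lemma v_eq {q : ℝ} (hq : -1 < q) (hq' : q < 1) (ξ : ℝ) : v q ξ = ξ + 2 * phase q ξ := by
  have hderiv : ∀ x : ℝ, HasDerivAt (fun x => x + 2 * phase q x)
      ((1 - q ^ 2) / (1 - 2 * q * cos x + q ^ 2)) x := by
    intro x
    have hD := one_sub_mul_cos_pos hq hq' x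
    have hE := kernel_denom_pos hq hq' x
    have h1 : HasDerivAt (fun x => q * sin x) (q * cos x) x := (hasDerivAt_sin x).const_mul q
    have h2 : HasDerivAt (fun x => 1 - q * cos x) (-(q * -sin x)) x :=
      ((hasDerivAt_cos x).const_mul q).const_sub 1
    have h3 := (hasDerivAt_id x).add (((h1.div h2 hD.ne').arctan).const_mul 2)
    refine h3.congr_deriv ?_
    have hs : sin x ^ 2 = 1 - cos x ^ 2 := by linarith [sin_sq_add_cos_sq x]
    have hsum : (1 - q * cos x) ^ 2 + (q * sin x) ^ 2 = 1 - 2 * q * cos x + q ^ 2 := by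
      rw [mul_pow, hs]; ring
    have hfrac : 1 + (q * sin x / (1 - q * cos x)) ^ 2
        = (1 - 2 * q * cos x + q ^ 2) / (1 - q * cos x) ^ 2 := by
      rw [← hsum]; field_simp
    have hnum : q * cos x * (1 - q * cos x) - q * sin x * -(q * -sin x) = q * cos x - q ^ 2 := by
      linear_combination (-q ^ 2) * hs
    simp only [Pi.div_apply] at *
    rw [hfrac, hnum]
    field_simp
    ring
  have h := intervalIntegral.integral_eq_sub_of_hasDerivAt (a := 0) (b := ξ)
    (fun x _ => hderiv x) ((continuous_kernel hq hq').intervalIntegrable _ _)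
  unfold v
  rw [h]
  simp [phase]

lemma v_mono {q : ℝ} (hq : -1 < q) (hq' : q < 1) : Monotone (v q) := by
  intro a b hab
  have h := intervalIntegral.integral_add_adjacent_intervals
    ((continuous_kernel hq hq').intervalIntegrable 0 a (μ := MeasureTheory.volume))
    ((continuous_kernel hq hq').intervalIntegrable a b (μ := MeasureTheory.volume))
  have hpos : 0 ≤ ∫ x in a..b, (1 - q ^ 2) / (1 - 2 * q * cos x + q ^ 2) :=
    intervalIntegral.integral_nonneg hab fun x _ =>
      div_nonneg (by nlinarith) (kernel_denom_pos hq hq' x).le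
  unfold v
  linarith

/-- The imaginary part of `e^{iα} (1 - q e^{-ix}) = r e^{i(α + phase q x)}`, with `r` independent
of `α`. -/
lemma exists_sin_sub {q : ℝ} (hq : -1 < q) (hq' : q < 1) (x : ℝ) :
    ∃ r : ℝ, ∀ α, sin α - q * sin (α - x) = r * sin (α + phase q x) := by
  have hD := one_sub_mul_cos_pos hq hq' x
  have hc : 0 < cos (phase q x) := cos_arctan_pos _
  have ht : sin (phase q x) / cos (phase q x) = q * sin x / (1 - q * cos x) := by
    rw [← tan_eq_sin_div_cos]; exact tan_arctan _
  rw [div_eq_div_iff hc.ne' hD.ne'] at ht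
  refine ⟨(1 - q * cos x) / cos (phase q x), fun α => ?_⟩
  rw [sin_add, sin_sub]
  field_simp
  linear_combination (-cos α) * ht

lemma bs_mul_sin (a b : ℝ) (l : ℤ) (x : ℝ) :
    bs a b l x * sin x = sin ((l + 1) * x) - b * sin (l * x) + a * sin ((l - 1) * x) := by
  have h0 := Polynomial.Chebyshev.U_real_cos x l
  have h1 := Polynomial.Chebyshev.U_real_cos x (l - 1)
  have h2 := Polynomial.Chebyshev.U_real_cos x (l - 2)
  push_cast at h0 h1 h2
  rw [show (l : ℝ) - 1 + 1 = l by ring] at h1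
  rw [show (l : ℝ) - 2 + 1 = l - 1 by ring] at h2
  unfold bs
  linear_combination h0 - b * h1 + a * h2

lemma bs_rec (a b : ℝ) (l : ℤ) (x : ℝ) :
    bs a b (l + 1) x = 2 * cos x * bs a b l x - bs a b (l - 1) x := by
  have h : ∀ k : ℤ, (Polynomial.Chebyshev.U ℝ (k + 1)).eval (cos x)
      = 2 * cos x * (Polynomial.Chebyshev.U ℝ k).eval (cos x)
        - (Polynomial.Chebyshev.U ℝ (k - 1)).eval (cos x) := by
    intro k
    rw [Polynomial.Chebyshev.U_add_one]
    simp
  have h0 := h l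
  have h1 := h (l - 1)
  have h2 := h (l - 2)
  rw [show l - 1 + 1 = l by ring, show l - 1 - 1 = l - 2 by ring] at h1
  rw [show l - 2 + 1 = l - 1 by ring, show l - 2 - 1 = l - 3 by ring] at h2
  unfold bs
  rw [show l + 1 - 1 = l by ring, show l + 1 - 2 = l - 1 by ring,
    show l - 1 - 1 = l - 2 by ring, show l - 1 - 2 = l - 3 by ring]
  linear_combination h0 - b * h1 + a * h2

lemma bs_zero (a b x : ℝ) : bs a b 0 x = 1 - a := by
  simp [bs, Polynomial.Chebyshev.U_neg_two]
  ring

lemma bs_one (a b x : ℝ) : bs a b 1 x = 2 * cos x - b := by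
  simp [bs]

/-- The quantization condition at the right end: a solution of the node equation with nonzero sine
annihilates `p_{m+1} - b₊ p_m + a₊ p_{m-1}`. -/
lemma boundary {pm qm pp qp : ℝ} (hpm : -1 < pm) (hpm' : pm < 1) (hqm : -1 < qm) (hqm' : qm < 1)
    (hpp : -1 < pp) (hpp' : pp < 1) (hqp : -1 < qp) (hqp' : qp < 1) (m k : ℕ) {x : ℝ}
    (hx : 2 * (m : ℝ) * x + v pm x + v qm x + v pp x + v qp x = 2 * π * ((k : ℝ) + 1))
    (hs : sin x ≠ 0) :
    bs (pm * qm) (pm + qm) (m + 1) x = (pp + qp) * bs (pm * qm) (pm + qm) m x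
      - pp * qp * bs (pm * qm) (pm + qm) (m - 1) x := by
  rw [v_eq hpm hpm', v_eq hqm hqm', v_eq hpp hpp', v_eq hqp hqp'] at hx
  obtain ⟨r1, e1⟩ := exists_sin_sub hpm hpm' x
  obtain ⟨r2, e2⟩ := exists_sin_sub hqm hqm' x
  obtain ⟨r3, e3⟩ := exists_sin_sub hpp hpp' x
  obtain ⟨r4, e4⟩ := exists_sin_sub hqp hqp' x
  -- The four factors act one after the other on `sin`, each by a phase shift and a scaling.
  have f2 : ∀ α, sin α - (pm + qm) * sin (α - x) + pm * qm * sin (α - 2 * x)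
      = r1 * r2 * sin (α + phase pm x + phase qm x) := by
    intro α
    have A := e1 α
    have B := e1 (α - x)
    have C := e2 (α + phase pm x)
    rw [show α - x - x = α - 2 * x by ring, show α - x + phase pm x = α + phase pm x - x by ring] at B
    linear_combination A - qm * B + r1 * C
  have f3 : ∀ α, sin α - (pp + qp) * sin (α - x) + pp * qp * sin (α - 2 * x)
      = r3 * r4 * sin (α + phase pp x + phase qp x) := by
    intro α
    have A := e3 α
    have B := e3 (α - x)
    have C := e4 (α + phase pp x)
    rw [show α - x - x = α - 2 * x by ring, show α - x + phase pp x = α + phase pp x - x by ring] at B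
    linear_combination A - qp * B + r3 * C
  have hzero : sin ((m + 2) * x + phase pm x + phase qm x + phase pp x + phase qp x) = 0 := by
    rw [show (m + 2) * x + phase pm x + phase qm x + phase pp x + phase qp x
      = ((k + 1 : ℕ) : ℝ) * π by push_cast; linarith]
    exact sin_nat_mul_pi _
  have g0 := bs_mul_sin (pm * qm) (pm + qm) (m + 1) x
  have g1 := bs_mul_sin (pm * qm) (pm + qm) m x
  have g2 := bs_mul_sin (pm * qm) (pm + qm) (m - 1) x
  push_cast at g0 g1 g2
  have t0 := f2 ((m + 2) * x)
  have t1 := f2 ((m + 2) * x - x)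
  have t2 := f2 ((m + 2) * x - 2 * x)
  have t3 := f3 ((m + 2) * x + phase pm x + phase qm x)
  rw [hzero] at t3
  ring_nf at g0 g1 g2 t0 t1 t2 t3
  apply mul_right_cancel₀ hs
  ring_nf
  linear_combination g0 - (pp + qp) * g1 + pp * qp * g2 + t0 - (pp + qp) * t1 + pp * qp * t2
    + r1 * r2 * t3

/-- The Christoffel–Darboux sum up to `l = n`, including the left boundary weight. -/
lemma darboux {a : ℝ} (ha : 1 - a ≠ 0) (b x y : ℝ) (n : ℕ) :
    (2 * cos x - 2 * cos y) * ∑ l ∈ Finset.range (n + 1),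
      bs a b (l : ℤ) x * bs a b (l : ℤ) y * (1 - a * (if l = 0 then 1 else 0))⁻¹
    = bs a b (n + 1) x * bs a b n y - bs a b n x * bs a b (n + 1) y := by
  induction n with
  | zero =>
    simp [bs_zero, bs_one]
    field_simp
    ring
  | succ n ih =>
    rw [Finset.sum_range_succ, mul_add, ih]
    have hx := bs_rec a b (n + 1) x
    have hy := bs_rec a b (n + 1) y
    rw [show (n : ℤ) + 1 - 1 = n by ring] at hx hy
    push_cast
    rw [hx, hy]
    simp
    ring

theorem stmt11 (m : ℕ) (hm : 1 ≤ m) (pm qm pp qp : ℝ)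
    (h1 : -1 < pm) (h2 : pm ≤ qm) (h3 : qm < 1)
    (h4 : -1 < pp) (h5 : pp ≤ qp) (h6 : qp < 1)
    (am bm ap bp : ℝ) (ham : am = pm * qm) (hbm : bm = pm + qm)
    (hap : ap = pp * qp) (hbp : bp = pp + qp)
    (ξhat : Fin (m+1) → ℝ)
    (hξ : ∀ lh : Fin (m+1),
      2*(m:ℝ)*(ξhat lh) + v pm (ξhat lh) + v qm (ξhat lh) + v pp (ξhat lh) + v qp (ξhat lh)
        = 2*Real.pi*(((lh : ℕ) : ℝ) + 1))
    (lh kh : Fin (m+1)) (hne : lh ≠ kh) :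
    ∑ l : Fin (m+1),
      bs am bm ((l : ℕ) : ℤ) (ξhat lh) * bs am bm ((l : ℕ) : ℤ) (ξhat kh) *
        ((1 - am * (if (l : ℕ) = 0 then 1 else 0))⁻¹ *
          (1 - ap * (if (l : ℕ) = m then 1 else 0))⁻¹) = 0 := by
  subst ham hbm hap hbp
  have hpm' : pm < 1 := by linarith
  have hqm : -1 < qm := by linarith
  have hpp' : pp < 1 := by linarith
  have hqp : -1 < qp := by linarith
  have hm0 : (1 : ℝ) ≤ m := by exact_mod_cast hm
  have hF : StrictMono fun x => 2 * (m : ℝ) * x + v pm x + v qm x + v pp x + v qp x := by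
    intro x y hxy
    have e1 := v_mono h1 hpm' hxy.le
    have e2 := v_mono hqm h3 hxy.le
    have e3 := v_mono h4 hpp' hxy.le
    have e4 := v_mono hqp h6 hxy.le
    have : 2 * (m : ℝ) * x < 2 * m * y := by nlinarith
    show _ + _ + _ + _ + _ < _
    linarith
  have hv0 : ∀ q, v q 0 = 0 := fun q => by simp [v]
  have hvpi : ∀ q, -1 < q → q < 1 → v q π = π := fun q hq hq' => by
    rw [v_eq hq hq']; simp [phase]
  have hmem : ∀ k, 0 < ξhat k ∧ ξhat k < π := by
    intro k
    have hk : ((k : ℕ) : ℝ) ≤ m := by exact_mod_cast Nat.lt_succ_iff.mp k.2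
    constructor
    · rw [← hF.lt_iff_lt]
      simp only [hv0, hξ k]
      have := pi_pos
      rw [mul_zero, add_zero, add_zero, add_zero, add_zero]
      positivity
    · rw [← hF.lt_iff_lt]
      simp only [hξ k, hvpi _ h1 hpm', hvpi _ hqm h3, hvpi _ h4 hpp', hvpi _ hqp h6]
      nlinarith [pi_pos]
  have hxy : ξhat lh ≠ ξhat kh := by
    intro h
    have e := hξ lh
    rw [h, hξ kh] at e
    have e' := mul_left_cancel₀ (by positivity : 2 * π ≠ 0) e
    apply hne
    ext
    have e2 : ((kh : ℕ) : ℝ) = (lh : ℕ) := by linarith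
    exact_mod_cast e2.symm
  have hcos : 2 * cos (ξhat lh) - 2 * cos (ξhat kh) ≠ 0 := by
    intro h
    exact hxy (injOn_cos ⟨(hmem lh).1.le, (hmem lh).2.le⟩ ⟨(hmem kh).1.le, (hmem kh).2.le⟩
      (by linarith))
  have hB := fun k : Fin (m + 1) => boundary h1 hpm' hqm h3 h4 hpp' hqp h6 m k (hξ k)
    (sin_pos_of_pos_of_lt_pi (hmem k).1 (hmem k).2).ne'
  have ham : 1 - pm * qm ≠ 0 := by nlinarith
  have hap : 1 - pp * qp ≠ 0 := by nlinarith
  obtain ⟨n, rfl⟩ : ∃ n, m = n + 1 := ⟨m - 1, by omega⟩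
  have hD := darboux ham (pm + qm) (ξhat lh) (ξhat kh) n
  rw [Fin.sum_univ_eq_sum_range (fun l : ℕ =>
      bs (pm * qm) (pm + qm) (l : ℤ) (ξhat lh) * bs (pm * qm) (pm + qm) (l : ℤ) (ξhat kh) *
        ((1 - pm * qm * (if l = 0 then 1 else 0))⁻¹ *
          (1 - pp * qp * (if l = n + 1 then 1 else 0))⁻¹)) (n + 1 + 1), Finset.sum_range_succ]
  have hinner : ∀ l ∈ Finset.range (n + 1),
      bs (pm * qm) (pm + qm) (l : ℤ) (ξhat lh) * bs (pm * qm) (pm + qm) (l : ℤ) (ξhat kh) *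
        ((1 - pm * qm * (if l = 0 then 1 else 0))⁻¹ *
          (1 - pp * qp * (if l = n + 1 then 1 else 0))⁻¹)
      = bs (pm * qm) (pm + qm) (l : ℤ) (ξhat lh) * bs (pm * qm) (pm + qm) (l : ℤ) (ξhat kh) *
        (1 - pm * qm * (if l = 0 then 1 else 0))⁻¹ := by
    intro l hl
    rw [if_neg (Finset.mem_range.mp hl).ne]
    simp
  rw [Finset.sum_congr rfl hinner]
  apply mul_left_cancel₀ hcos
  rw [mul_add, hD]
  have hx := hB lh
  have hy := hB kh
  have rx := bs_rec (pm * qm) (pm + qm) (n + 1) (ξhat lh)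
  have ry := bs_rec (pm * qm) (pm + qm) (n + 1) (ξhat kh)
  push_cast at hx hy ⊢
  rw [show (n : ℤ) + 1 - 1 = n by ring] at hx hy rx ry
  rw [rx] at hx
  rw [ry] at hy
  simp
  field_simp
  -- The eigenvalue equation at `l = m` is `2 cos ξ p_m = b₊ p_m + (1 - a₊) p_{m-1}`.
  linear_combination bs (pm * qm) (pm + qm) (n + 1) (ξhat kh) * hx
    - bs (pm * qm) (pm + qm) (n + 1) (ξhat lh) * hy
end
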